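/- arXiv:2403.19494 — 2 statements merged into one kernel-verified Lean document; each statement's English description precedes it below -/
import Mathlib

section
/- (Corollary 4.4, logistic instance.) Let ℓ_log(s,j) = log₂(Σ_{k=0}^{n_e} e^{s_k − s_j}). Then for every probability measure μ on X×ℝ, every measurable predictor h : X → ℝ and every measurable deferral function r : X → ℝ^{n_e+1}, E_{L_def}(h,r) − E*_{L_def} ≤ (E_L(h) − inf_{h' measurable} E_L(h')) + √(2·n_e)·(l̄ + Σ_{j=1}^{n_e} C_j)^{1/2}·(E_{L^h_{ℓ_log}}(r) − inf_{r' measurable} E_{L^h_{ℓ_log}}(r'))^{1/2}, where E_L(h) = ∫ L(h(x),y) dμ(x,y) and L^h_{ℓ_log} is the two-stage surrogate built from ℓ_log with h fixed. -/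
open MeasureTheory Finset ENNReal

variable {X : Type*}

/-- The deferral loss `L_def(h,r,x,y)`. -/
noncomputable def defLoss (nE : ℕ) (L : ℝ → ℝ → ℝ) (c : Fin nE → X × ℝ → ℝ)
    (sel : (Fin (nE + 1) → ℝ) → Fin (nE + 1))
    (h : X → ℝ) (r : X → Fin (nE + 1) → ℝ) (z : X × ℝ) : ℝ :=
  (if sel (r z.1) = 0 then L (h z.1) z.2 else 0)
    + ∑ j : Fin nE, if sel (r z.1) = j.succ then c j z else 0

/-- The single-stage surrogate loss `L_ℓ(h,r,x,y)`. -/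
noncomputable def surLoss (nE : ℕ) (L : ℝ → ℝ → ℝ) (c : Fin nE → X × ℝ → ℝ)
    (ℓ : (Fin (nE + 1) → ℝ) → Fin (nE + 1) → ℝ)
    (h : X → ℝ) (r : X → Fin (nE + 1) → ℝ) (z : X × ℝ) : ℝ :=
  (∑ j, c j z) * ℓ (r z.1) 0
    + ∑ j : Fin nE, (L (h z.1) z.2 + ∑ j' ∈ univ.erase j, c j' z) * ℓ (r z.1) j.succ
    - ((nE : ℝ) - 1) * L (h z.1) z.2

/-- The two-stage surrogate loss `L^h_ℓ(r,x,y)` (no `−(n_e−1)L` term). -/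
noncomputable def surLossTS (nE : ℕ) (L : ℝ → ℝ → ℝ) (c : Fin nE → X × ℝ → ℝ)
    (ℓ : (Fin (nE + 1) → ℝ) → Fin (nE + 1) → ℝ)
    (h : X → ℝ) (r : X → Fin (nE + 1) → ℝ) (z : X × ℝ) : ℝ :=
  (∑ j, c j z) * ℓ (r z.1) 0
    + ∑ j : Fin nE, (L (h z.1) z.2 + ∑ j' ∈ univ.erase j, c j' z) * ℓ (r z.1) j.succ

/-- Generalization error of a nonnegative loss, as a Lebesgue integral in `[0,∞]`. -/
noncomputable def genErr {W : Type*} [MeasurableSpace W] (μ : Measure W) (f : W → ℝ) : ℝ≥0∞ :=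
  ∫⁻ w, ENNReal.ofReal (f w) ∂μ

variable [MeasurableSpace X]

/-- Multi-class zero-one generalization error `E_{ℓ01}(r)`. -/
noncomputable def E01 (nE : ℕ) (sel : (Fin (nE + 1) → ℝ) → Fin (nE + 1))
    (ν : Measure (X × Fin (nE + 1))) (r : X → Fin (nE + 1) → ℝ) : ℝ≥0∞ :=
  ν {z | sel (r z.1) ≠ z.2}

/-- Multi-class surrogate generalization error `E_ℓ(r)`. -/
noncomputable def Eell (nE : ℕ) (ℓ : (Fin (nE + 1) → ℝ) → Fin (nE + 1) → ℝ)
    (ν : Measure (X × Fin (nE + 1))) (r : X → Fin (nE + 1) → ℝ) : ℝ≥0∞ :=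
  ∫⁻ z, ENNReal.ofReal (ℓ (r z.1) z.2) ∂ν

/-- The multinomial logistic loss `ℓ_log(s,j) = log₂(Σ_k e^{s_k − s_j})` on score vectors. -/
noncomputable def ellLog (nE : ℕ) (s : Fin (nE + 1) → ℝ) (j : Fin (nE + 1)) : ℝ :=
  Real.logb 2 (∑ k, Real.exp (s k - s j))

/-- The vector of costs `(L(h(x),y), c_1, ..., c_{n_e})`. -/
noncomputable def costVec (nE : ℕ) (L : ℝ → ℝ → ℝ) (c : Fin nE → X × ℝ → ℝ)
    (h : X → ℝ) (z : X × ℝ) : Fin (nE + 1) → ℝ :=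
  Fin.cons (L (h z.1) z.2) (fun j => c j z)

lemma defLoss_eq (nE : ℕ) (L : ℝ → ℝ → ℝ) (c : Fin nE → X × ℝ → ℝ)
    (sel : (Fin (nE + 1) → ℝ) → Fin (nE + 1))
    (h : X → ℝ) (r : X → Fin (nE + 1) → ℝ) (z : X × ℝ) :
    defLoss nE L c sel h r z = costVec nE L c h z (sel (r z.1)) := by
  unfold defLoss costVec
  generalize sel (r z.1) = k
  refine Fin.cases ?_ (fun i => ?_) k
  · simp [(Fin.succ_ne_zero _).symm]
  · simp [Fin.succ_ne_zero]

lemma surLossTS_eq (nE : ℕ) (L : ℝ → ℝ → ℝ) (c : Fin nE → X × ℝ → ℝ)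
    (ℓ : (Fin (nE + 1) → ℝ) → Fin (nE + 1) → ℝ)
    (h : X → ℝ) (r : X → Fin (nE + 1) → ℝ) (z : X × ℝ) :
    surLossTS nE L c ℓ h r z
      = ∑ k, ((∑ i, costVec nE L c h z i) - costVec nE L c h z k) * ℓ (r z.1) k := by
  unfold surLossTS costVec
  rw [Fin.sum_univ_succ, Fin.sum_univ_succ]
  simp only [Fin.cons_zero, Fin.cons_succ]
  congr 1
  · ring
  · refine Finset.sum_congr rfl fun j _ => ?_
    rw [← Finset.add_sum_erase univ (fun j => c j z) (Finset.mem_univ j)]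
    ring

lemma ellLog_nonneg (nE : ℕ) (s : Fin (nE + 1) → ℝ) (j : Fin (nE + 1)) : 0 ≤ ellLog nE s j := by
  unfold ellLog
  apply Real.logb_nonneg (by norm_num)
  have := Finset.single_le_sum (f := fun k => Real.exp (s k - s j))
    (fun k _ => (Real.exp_pos _).le) (Finset.mem_univ j)
  simpa using this

lemma ellLog_eq (nE : ℕ) (s : Fin (nE + 1) → ℝ) (j : Fin (nE + 1)) :
    Real.log 2 * ellLog nE s j = Real.log (∑ k, Real.exp (s k)) - s j := by
  unfold ellLog Real.logb
  have h2 : Real.log 2 ≠ 0 := (Real.log_pos (by norm_num)).ne'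
  rw [mul_div_cancel₀ _ h2]
  have : ∑ k, Real.exp (s k - s j) = (∑ k, Real.exp (s k)) * Real.exp (- s j) := by
    rw [Finset.sum_mul]
    exact Finset.sum_congr rfl fun k _ => by rw [← Real.exp_add, sub_eq_add_neg]
  rw [this, Real.log_mul _ (Real.exp_pos _).ne', Real.log_exp]
  · ring
  · exact (Finset.sum_pos (fun k _ => Real.exp_pos _) Finset.univ_nonempty).ne'

/-- Shift of scores by `t` from index `k` to index `k'`. -/
noncomputable def shiftS (nE : ℕ) (t : ℝ) (k k' : Fin (nE + 1)) (s : Fin (nE + 1) → ℝ) :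
    Fin (nE + 1) → ℝ :=
  fun i => s i + t * ((if k' = i then 1 else 0) - (if k = i then 1 else 0))

lemma lse_shift (nE : ℕ) (t : ℝ) (ht : 0 ≤ t) (k k' : Fin (nE + 1)) (s : Fin (nE + 1) → ℝ)
    (hk : s k' ≤ s k) :
    Real.log (∑ i, Real.exp (shiftS nE t k k' s i))
      ≤ Real.log (∑ i, Real.exp (s i)) + t ^ 2 / 2 := by
  have hpos : ∀ u : Fin (nE + 1) → ℝ, 0 < ∑ i, Real.exp (u i) := fun u =>
    Finset.sum_pos (fun k _ => Real.exp_pos _) Finset.univ_nonempty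
  rw [← Real.log_exp (t ^ 2 / 2), ← Real.log_mul (hpos _).ne' (Real.exp_pos _).ne']
  apply Real.log_le_log (hpos _)
  have hE : 1 ≤ Real.exp (t ^ 2 / 2) := Real.one_le_exp (by positivity)
  by_cases hkk : k = k'
  · subst hkk
    have : shiftS nE t k k s = s := by funext i; simp [shiftS]
    rw [this]
    exact le_mul_of_one_le_right (hpos _).le hE
  · have hmem : k' ∈ univ.erase k := by simp [Ne.symm hkk]
    rw [← Finset.add_sum_erase univ _ (Finset.mem_univ k),
      ← Finset.add_sum_erase (univ.erase k) _ hmem,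
      ← Finset.add_sum_erase univ (fun i => Real.exp (s i)) (Finset.mem_univ k),
      ← Finset.add_sum_erase (univ.erase k) (fun i => Real.exp (s i)) hmem]
    have h1 : shiftS nE t k k' s k = s k + -t := by simp [shiftS, Ne.symm hkk]
    have h2 : shiftS nE t k k' s k' = s k' + t := by simp [shiftS, hkk]
    have h3 : ∑ i ∈ (univ.erase k).erase k', Real.exp (shiftS nE t k k' s i)
        = ∑ i ∈ (univ.erase k).erase k', Real.exp (s i) := by
      refine Finset.sum_congr rfl fun i hi => ?_
      simp only [Finset.mem_erase, Finset.mem_univ, and_true] at hi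
      simp [shiftS, Ne.symm hi.1, Ne.symm hi.2]
    rw [h1, h2, h3, Real.exp_add, Real.exp_add]
    have hR : 0 ≤ ∑ i ∈ (univ.erase k).erase k', Real.exp (s i) :=
      Finset.sum_nonneg fun i _ => (Real.exp_pos _).le
    generalize ∑ i ∈ (univ.erase k).erase k', Real.exp (s i) = R at hR
    have hab : Real.exp (s k') ≤ Real.exp (s k) := Real.exp_le_exp.2 hk
    have ha := Real.exp_pos (s k)
    have hb := Real.exp_pos (s k')
    have hc := Real.cosh_le_exp_half_sq t
    rw [Real.cosh_eq] at hc
    have hm : Real.exp (-t) ≤ Real.exp t := Real.exp_le_exp.2 (by linarith)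
    generalize Real.exp (s k) = a at *
    generalize Real.exp (s k') = b at *
    generalize Real.exp (t ^ 2 / 2) = E at *
    generalize Real.exp t = p at *
    generalize Real.exp (-t) = q at *
    nlinarith [mul_nonneg (sub_nonneg.2 hab) (sub_nonneg.2 hm),
      mul_nonneg (add_pos ha hb).le (sub_nonneg.2 hc), mul_nonneg hR (sub_nonneg.2 hE)]

lemma key_pointwise (nE : ℕ) (B : ℝ) (a : Fin (nE + 1) → ℝ) (ha : ∀ i, 0 ≤ a i)
    (hB : ∑ i, a i ≤ B) (t : ℝ) (ht : 0 ≤ t) (k k' : Fin (nE + 1)) (s : Fin (nE + 1) → ℝ)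
    (hk : s k' ≤ s k) :
    t * a k + Real.log 2 * ∑ j, ((∑ i, a i) - a j) * ellLog nE (shiftS nE t k k' s) j
      ≤ Real.log 2 * (∑ j, ((∑ i, a i) - a j) * ellLog nE s j) + t * a k'
        + nE * B * (t ^ 2 / 2) := by
  have hl := lse_shift nE t ht k k' s hk
  have e : ∀ u : Fin (nE + 1) → ℝ, Real.log 2 * ∑ j, ((∑ i, a i) - a j) * ellLog nE u j
      = nE * (∑ i, a i) * Real.log (∑ i, Real.exp (u i))
        - ∑ j, ((∑ i, a i) - a j) * u j := by
    intro u
    have : ∀ j, Real.log 2 * (((∑ i, a i) - a j) * ellLog nE u j)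
       = ((∑ i, a i) - a j) * Real.log (∑ i, Real.exp (u i)) - ((∑ i, a i) - a j) * u j := by
      intro j
      rw [mul_left_comm, ellLog_eq]; ring
    rw [Finset.mul_sum, Finset.sum_congr rfl fun j _ => this j, Finset.sum_sub_distrib,
      ← Finset.sum_mul, Finset.sum_sub_distrib]
    simp only [Finset.sum_const, Finset.card_univ, Fintype.card_fin, nsmul_eq_mul]
    push_cast
    ring
  have hs : ∑ j, ((∑ i, a i) - a j) * shiftS nE t k k' s j
      = ∑ j, ((∑ i, a i) - a j) * s j + t * (a k - a k') := by
    simp only [shiftS, mul_add, Finset.sum_add_distrib]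
    congr 1
    have : ∀ j, ((∑ i, a i) - a j) * (t * ((if k' = j then (1:ℝ) else 0) - (if k = j then 1 else 0)))
       = (if k' = j then t * ((∑ i, a i) - a j) else 0)
        - (if k = j then t * ((∑ i, a i) - a j) else 0) := by
      intro j
      split_ifs <;> ring
    rw [Finset.sum_congr rfl fun j _ => this j, Finset.sum_sub_distrib]
    simp
    ring
  rw [e, e, hs]
  have hA : 0 ≤ ∑ i, a i := Finset.sum_nonneg fun i _ => ha i
  have h1 := mul_le_mul_of_nonneg_left hl (mul_nonneg (Nat.cast_nonneg (α := ℝ) nE) hA)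
  have h2 : (nE : ℝ) * (∑ i, a i) * (t ^ 2 / 2) ≤ nE * B * (t ^ 2 / 2) := by gcongr
  linarith

lemma final_real {M d e : ℝ} (hM : 0 < M) (hd : 0 ≤ d)
    (H : ∀ t : ℝ, 0 ≤ t → t * d ≤ Real.log 2 * e + M * (t ^ 2 / 2)) (he : 0 ≤ e) :
    d ≤ Real.sqrt (2 * M * e) := by
  apply Real.le_sqrt_of_sq_le
  have h := H (d / M) (by positivity)
  have hl : Real.log 2 ≤ 1 := by linarith [Real.log_two_lt_d9]
  have h3 : Real.log 2 * e ≤ e := by nlinarith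
  have h4 : d / M * d = d ^ 2 / M := by ring
  have h5 : M * ((d / M) ^ 2 / 2) = d ^ 2 / M / 2 := by field_simp
  have h6 : d ^ 2 / M ≤ 2 * e := by linarith
  rw [div_le_iff₀ hM] at h6
  linarith

lemma final_ennreal {nE : ℕ} (hnE : 1 ≤ nE) {B : ℝ} (hB : 0 < B) {D D' S S' : ℝ≥0∞}
    (hD : D ≠ ∞) (hD' : D' ≠ ∞) (hS' : S' ≠ ∞) (hle : S' ≤ S)
    (H : ∀ t : ℝ, 0 ≤ t → ENNReal.ofReal t * D + ENNReal.ofReal (Real.log 2) * S'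
      ≤ ENNReal.ofReal (Real.log 2) * S + ENNReal.ofReal t * D'
        + ENNReal.ofReal (nE * B * (t ^ 2 / 2))) :
    D ≤ D' + ENNReal.ofReal (Real.sqrt (2 * nE) * B ^ ((1 : ℝ) / 2))
      * (S - S') ^ ((1 : ℝ) / 2) := by
  have hn : (0 : ℝ) < nE := by exact_mod_cast hnE
  have hl : 0 < Real.log 2 := Real.log_pos (by norm_num)
  by_cases hS : S = ∞
  · subst hS
    have hK : ENNReal.ofReal (Real.sqrt (2 * nE) * B ^ ((1 : ℝ) / 2)) ≠ 0 := by
      simp only [ne_eq, ENNReal.ofReal_eq_zero, not_le]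
      positivity
    rw [ENNReal.top_sub hS', ENNReal.top_rpow_of_pos (by norm_num), ENNReal.mul_top hK]
    simp
  · lift D to NNReal using hD
    lift D' to NNReal using hD'
    lift S to NNReal using hS
    lift S' to NNReal using hS'
    rcases le_total D D' with hDD | hDD
    · exact le_add_right (by exact_mod_cast hDD)
    have hle' : S' ≤ S := by exact_mod_cast hle
    have hle2 : (S' : ℝ) ≤ S := by exact_mod_cast hle'
    have hDD2 : (D' : ℝ) ≤ D := by exact_mod_cast hDD
    have key : ∀ t : ℝ, 0 ≤ t → t * ((D : ℝ) - D')
        ≤ Real.log 2 * ((S : ℝ) - S') + nE * B * (t ^ 2 / 2) := by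
      intro t ht
      have h := H t ht
      have cv : ∀ x : NNReal, (x : ℝ≥0∞) = ENNReal.ofReal x := fun x => by simp
      rw [cv D, cv D', cv S, cv S', ← ENNReal.ofReal_mul ht, ← ENNReal.ofReal_mul ht,
        ← ENNReal.ofReal_mul hl.le, ← ENNReal.ofReal_mul hl.le,
        ← ENNReal.ofReal_add (by positivity) (by positivity),
        ← ENNReal.ofReal_add (by positivity) (by positivity),
        ← ENNReal.ofReal_add (by positivity) (by positivity),
        ENNReal.ofReal_le_ofReal_iff (by positivity)] at h
      linarith
    have hf := final_real (mul_pos hn hB) (sub_nonneg.2 hDD2) key (sub_nonneg.2 hle2)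
    have cv : ∀ x : NNReal, (x : ℝ≥0∞) = ENNReal.ofReal x := fun x => by simp
    rw [cv D, cv D', cv S, cv S', ← ENNReal.ofReal_sub _ (by positivity),
      ENNReal.ofReal_rpow_of_nonneg (sub_nonneg.2 hle2) (by norm_num),
      ← ENNReal.ofReal_mul (by positivity), ← ENNReal.ofReal_add (by positivity)
        (mul_nonneg (by positivity) (Real.rpow_nonneg (sub_nonneg.2 hle2) _))]
    apply ENNReal.ofReal_le_ofReal
    rw [← Real.sqrt_eq_rpow, ← Real.sqrt_eq_rpow, ← Real.sqrt_mul (by positivity),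
      ← Real.sqrt_mul (by positivity)]
    have : 2 * (nE * B) * ((S : ℝ) - S') = 2 * nE * B * ((S : ℝ) - S') := by ring
    rw [this] at hf
    linarith

/-- Corollary 4.4, logistic instance. -/
theorem two_stage_full_logistic_excess_error_bound {X : Type*} [MeasurableSpace X]
    (nE : ℕ) (hnE : 1 ≤ nE)
    (lbar : ℝ) (hlbar : 0 < lbar)
    (C : Fin nE → ℝ) (hC : ∀ j, 0 < C j)
    (L : ℝ → ℝ → ℝ) (hLmeas : Measurable fun p : ℝ × ℝ => L p.1 p.2)
    (hL : ∀ y' y, L y' y ∈ Set.Icc 0 lbar)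
    (c : Fin nE → X × ℝ → ℝ) (hcmeas : ∀ j, Measurable (c j))
    (hc : ∀ j z, c j z ∈ Set.Ioc 0 (C j))
    (sel : (Fin (nE + 1) → ℝ) → Fin (nE + 1)) (hselmeas : Measurable sel)
    (hsel : ∀ (s : Fin (nE + 1) → ℝ) (j : Fin (nE + 1)), s j ≤ s (sel s))
    (μ : Measure (X × ℝ)) [IsProbabilityMeasure μ]
    (h : X → ℝ) (hh : Measurable h)
    (r : X → Fin (nE + 1) → ℝ) (hr : Measurable r) :
    genErr μ (defLoss nE L c sel h r)
        - (⨅ (h' : X → ℝ) (_ : Measurable h') (r' : X → Fin (nE + 1) → ℝ)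
            (_ : Measurable r'), genErr μ (defLoss nE L c sel h' r'))
      ≤ (genErr μ (fun z => L (h z.1) z.2)
            - ⨅ (h' : X → ℝ) (_ : Measurable h'), genErr μ (fun z => L (h' z.1) z.2))
        + ENNReal.ofReal (Real.sqrt (2 * nE) * (lbar + ∑ j, C j) ^ ((1 : ℝ) / 2)) *
            (genErr μ (surLossTS nE L c (ellLog nE) h r)
              - ⨅ (r' : X → Fin (nE + 1) → ℝ) (_ : Measurable r'),
                  genErr μ (surLossTS nE L c (ellLog nE) h r')) ^ ((1 : ℝ) / 2) := by
  classical
  have hB : 0 < lbar + ∑ j, C j := add_pos_of_pos_of_nonneg hlbar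
    (Finset.sum_nonneg fun j _ => (hC j).le)
  have hl : 0 < Real.log 2 := Real.log_pos (by norm_num)
  -- facts on the cost vector
  have cv0 : ∀ (h' : X → ℝ) z i, 0 ≤ costVec nE L c h' z i := by
    intro h' z i
    refine Fin.cases ?_ (fun j => ?_) i
    · simpa [costVec] using (hL _ _).1
    · simpa [costVec] using (hc j z).1.le
  have cvB : ∀ (h' : X → ℝ) z, ∑ i, costVec nE L c h' z i ≤ lbar + ∑ j, C j := by
    intro h' z
    rw [Fin.sum_univ_succ]
    simp only [costVec, Fin.cons_zero, Fin.cons_succ]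
    exact add_le_add (hL _ _).2 (Finset.sum_le_sum fun j _ => (hc j z).2)
  have cvle : ∀ (h' : X → ℝ) z i, costVec nE L c h' z i ≤ lbar + ∑ j, C j := fun h' z i =>
    (Finset.single_le_sum (fun i _ => cv0 h' z i) (Finset.mem_univ i)).trans (cvB h' z)
  have Lm : ∀ h' : X → ℝ, Measurable h' → Measurable fun z : X × ℝ => L (h' z.1) z.2 :=
    fun h' hh' => hLmeas.comp ((hh'.comp measurable_fst).prodMk measurable_snd)
  have selm : ∀ r' : X → Fin (nE + 1) → ℝ, Measurable r' → ∀ i,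
      MeasurableSet {z : X × ℝ | sel (r' z.1) = i} := fun r' hr' i =>
    (hselmeas.comp (hr'.comp measurable_fst)) (measurableSet_singleton i)
  have selmX : ∀ r' : X → Fin (nE + 1) → ℝ, Measurable r' → ∀ i,
      MeasurableSet {x : X | sel (r' x) = i} := fun r' hr' i =>
    (hselmeas.comp hr') (measurableSet_singleton i)
  have dm : ∀ (h' : X → ℝ) (r' : X → Fin (nE + 1) → ℝ), Measurable h' → Measurable r' →
      Measurable (defLoss nE L c sel h' r') := by
    intro h' r' hh' hr'
    unfold defLoss
    refine Measurable.add (Measurable.ite (selm r' hr' 0) (Lm h' hh') measurable_const) ?_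
    exact Finset.measurable_fun_sum _ fun j _ =>
      Measurable.ite (selm r' hr' _) (hcmeas j) measurable_const
  have d0 : ∀ (h' : X → ℝ) (r' : X → Fin (nE + 1) → ℝ) z, 0 ≤ defLoss nE L c sel h' r' z := by
    intro h' r' z
    rw [defLoss_eq]; exact cv0 _ _ _
  have dfin : ∀ (h' : X → ℝ) (r' : X → Fin (nE + 1) → ℝ),
      genErr μ (defLoss nE L c sel h' r') ≠ ∞ := by
    intro h' r'
    refine ne_top_of_le_ne_top (b := ∫⁻ _, ENNReal.ofReal (lbar + ∑ j, C j) ∂μ) (by simp) ?_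
    refine lintegral_mono fun z => ENNReal.ofReal_le_ofReal ?_
    rw [defLoss_eq]; exact cvle _ _ _
  have sm : ∀ r' : X → Fin (nE + 1) → ℝ, Measurable r' →
      Measurable (surLossTS nE L c (ellLog nE) h r') := by
    intro r' hr'
    have em : ∀ j, Measurable fun z : X × ℝ => ellLog nE (r' z.1) j := by
      intro j
      have hi : ∀ i, Measurable fun z : X × ℝ => r' z.1 i := fun i =>
        (measurable_pi_apply i).comp (hr'.comp measurable_fst)
      unfold ellLog Real.logb
      exact (Real.measurable_log.comp (Finset.measurable_fun_sum _ fun k _ =>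
        Real.measurable_exp.comp ((hi k).sub (hi j)))).div_const _
    unfold surLossTS
    refine Measurable.add ((Finset.measurable_fun_sum _ fun j _ => hcmeas j).mul (em 0)) ?_
    exact Finset.measurable_fun_sum _ fun j _ =>
      ((Lm h hh).add (Finset.measurable_fun_sum _ fun j' _ => hcmeas j')).mul (em _)
  have s0 : ∀ (r' : X → Fin (nE + 1) → ℝ) z, 0 ≤ surLossTS nE L c (ellLog nE) h r' z := by
    intro r' z
    rw [surLossTS_eq]
    refine Finset.sum_nonneg fun k _ => mul_nonneg ?_ (ellLog_nonneg _ _ _)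
    exact sub_nonneg.2 (Finset.single_le_sum (fun i _ => cv0 h z i) (Finset.mem_univ k))
  set Sst := ⨅ (r' : X → Fin (nE + 1) → ℝ) (_ : Measurable r'),
      genErr μ (surLossTS nE L c (ellLog nE) h r') with hSst
  have Sle : ∀ r' : X → Fin (nE + 1) → ℝ, Measurable r' →
      Sst ≤ genErr μ (surLossTS nE L c (ellLog nE) h r') := fun r' hr' => iInf₂_le r' hr'
  have Sfin : Sst ≠ ∞ := by
    refine ne_top_of_le_ne_top ?_ (Sle (fun _ _ => 0) measurable_const)
    refine ne_top_of_le_ne_top (b := ∫⁻ _, ENNReal.ofReal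
      (∑ k : Fin (nE + 1), (lbar + ∑ j, C j) * ellLog nE (fun _ => 0) k) ∂μ) (by
        simp only [lintegral_const, measure_univ, mul_one]; exact ENNReal.ofReal_ne_top) ?_
    refine lintegral_mono fun z => ENNReal.ofReal_le_ofReal ?_
    rw [surLossTS_eq]
    refine Finset.sum_le_sum fun k _ => mul_le_mul_of_nonneg_right ?_ (ellLog_nonneg _ _ _)
    linarith [cv0 h z k, cvB h z]
  set Lst := ⨅ (h' : X → ℝ) (_ : Measurable h'), genErr μ (fun z => L (h' z.1) z.2) with hLst
  -- second stage
  have part2 : ∀ r' : X → Fin (nE + 1) → ℝ, Measurable r' →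
      genErr μ (defLoss nE L c sel h r) ≤ genErr μ (defLoss nE L c sel h r')
        + ENNReal.ofReal (Real.sqrt (2 * nE) * (lbar + ∑ j, C j) ^ ((1 : ℝ) / 2)) *
            (genErr μ (surLossTS nE L c (ellLog nE) h r) - Sst) ^ ((1 : ℝ) / 2) := by
    intro r' hr'
    refine final_ennreal hnE hB (dfin _ _) (dfin _ _) Sfin (Sle r hr) fun t ht => ?_
    let rt : X → Fin (nE + 1) → ℝ := fun x => shiftS nE t (sel (r x)) (sel (r' x)) (r x)
    have hrt : Measurable rt := by
      refine measurable_pi_lambda _ fun i => ?_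
      change Measurable fun x => r x i
        + t * ((if sel (r' x) = i then (1 : ℝ) else 0) - (if sel (r x) = i then 1 else 0))
      refine ((measurable_pi_apply i).comp hr).add (Measurable.const_mul (Measurable.sub
        (Measurable.ite (selmX r' hr' i) measurable_const measurable_const)
        (Measurable.ite (selmX r hr i) measurable_const measurable_const)) t)
    have hpt : ∀ z, t * defLoss nE L c sel h r z
          + Real.log 2 * surLossTS nE L c (ellLog nE) h rt z
        ≤ Real.log 2 * surLossTS nE L c (ellLog nE) h r z
          + t * defLoss nE L c sel h r' z + nE * (lbar + ∑ j, C j) * (t ^ 2 / 2) := by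
      intro z
      rw [defLoss_eq, defLoss_eq, surLossTS_eq, surLossTS_eq]
      exact key_pointwise nE _ _ (cv0 h z) (cvB h z) t ht _ _ _ (hsel _ _)
    calc ENNReal.ofReal t * genErr μ (defLoss nE L c sel h r) + ENNReal.ofReal (Real.log 2) * Sst
        ≤ ENNReal.ofReal t * genErr μ (defLoss nE L c sel h r) + ENNReal.ofReal (Real.log 2)
            * genErr μ (surLossTS nE L c (ellLog nE) h rt) := by
          gcongr; exact Sle rt hrt
      _ = ∫⁻ z, (ENNReal.ofReal t * ENNReal.ofReal (defLoss nE L c sel h r z)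
            + ENNReal.ofReal (Real.log 2)
              * ENNReal.ofReal (surLossTS nE L c (ellLog nE) h rt z)) ∂μ := by
          unfold genErr
          rw [lintegral_add_left ((dm h r hh hr).ennreal_ofReal.const_mul _),
            lintegral_const_mul _ (dm h r hh hr).ennreal_ofReal,
            lintegral_const_mul _ (sm rt hrt).ennreal_ofReal]
      _ ≤ ∫⁻ z, (ENNReal.ofReal (Real.log 2)
              * ENNReal.ofReal (surLossTS nE L c (ellLog nE) h r z)
            + ENNReal.ofReal t * ENNReal.ofReal (defLoss nE L c sel h r' z)
            + ENNReal.ofReal (nE * (lbar + ∑ j, C j) * (t ^ 2 / 2))) ∂μ := by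
          refine lintegral_mono fun z => ?_
          have a1 := mul_nonneg ht (d0 h r z)
          have a2 := mul_nonneg ht (d0 h r' z)
          have a3 := mul_nonneg hl.le (s0 r z)
          have a4 := mul_nonneg hl.le (s0 rt z)
          simp only [← ENNReal.ofReal_mul ht, ← ENNReal.ofReal_mul hl.le]
          rw [← ENNReal.ofReal_add a1 a4, ← ENNReal.ofReal_add a3 a2,
            ← ENNReal.ofReal_add (add_nonneg a3 a2) (by positivity)]
          exact ENNReal.ofReal_le_ofReal (hpt z)
      _ = _ := by
          unfold genErr
          rw [lintegral_add_right _ measurable_const,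
            lintegral_add_right _ ((dm h r' hh hr').ennreal_ofReal.const_mul _),
            lintegral_const_mul _ (dm h r' hh hr').ennreal_ofReal,
            lintegral_const_mul _ (sm r hr).ennreal_ofReal]
          simp
  -- first stage
  have part1 : ∀ (h' : X → ℝ), Measurable h' → ∀ r' : X → Fin (nE + 1) → ℝ, Measurable r' →
      genErr μ (defLoss nE L c sel h r') ≤ genErr μ (defLoss nE L c sel h' r')
        + (genErr μ (fun z => L (h z.1) z.2) - Lst) := by
    intro h' hh' r' hr'
    let g : X → ℝ := fun x => if sel (r' x) = 0 then h' x else h x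
    have hg : Measurable g := Measurable.ite (selmX r' hr' 0) hh' hh
    have hLg : Lst ≤ genErr μ (fun z => L (g z.1) z.2) := iInf₂_le g hg
    have hfin : ∀ f : X → ℝ, genErr μ (fun z => L (f z.1) z.2) ≠ ∞ := by
      intro f
      refine ne_top_of_le_ne_top (b := ∫⁻ _, ENNReal.ofReal lbar ∂μ) (by simp) ?_
      exact lintegral_mono fun z => ENNReal.ofReal_le_ofReal (hL _ _).2
    have heq : genErr μ (defLoss nE L c sel h r') + genErr μ (fun z => L (g z.1) z.2)
        = genErr μ (defLoss nE L c sel h' r') + genErr μ (fun z => L (h z.1) z.2) := by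
      unfold genErr
      rw [← lintegral_add_left (dm h r' hh hr').ennreal_ofReal,
        ← lintegral_add_left (dm h' r' hh' hr').ennreal_ofReal]
      refine lintegral_congr fun z => ?_
      rw [← ENNReal.ofReal_add (d0 _ _ _) (hL _ _).1, ← ENNReal.ofReal_add (d0 _ _ _) (hL _ _).1]
      congr 1
      simp only [defLoss, g]
      split_ifs <;> ring
    have h1 : genErr μ (defLoss nE L c sel h r') + Lst
        ≤ genErr μ (defLoss nE L c sel h' r') + genErr μ (fun z => L (h z.1) z.2) :=
      (add_le_add_right hLg _).trans heq.le
    have hLh : Lst ≤ genErr μ (fun z => L (h z.1) z.2) := iInf₂_le h hh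
    have hLfin : Lst ≠ ∞ := ne_top_of_le_ne_top (hfin h) hLh
    rw [← tsub_add_cancel_of_le hLh, ← add_assoc] at h1
    exact (ENNReal.add_le_add_iff_right hLfin).1 h1
  rw [tsub_le_iff_tsub_le]
  refine le_iInf₂ fun h' hh' => le_iInf₂ fun r' hr' => ?_
  rw [tsub_le_iff_right]
  refine (part2 r' hr').trans ((add_le_add_left (part1 h' hh' r' hr') _).trans_eq ?_)
  rw [add_assoc]
end

section
/- (Corollary 5.4: single-expert two-stage excess error bound, general Γ.) Assume there exist α ∈ (0,1] and β > 0 such that for every probability measure ν on X×{−1,+1} and every measurable r : X → ℝ, E_{ℓ01}(r) − E*_{ℓ01} ≤ β·(E_Φ(r) − E*_Φ)^α. Then for every probability measure μ on X×ℝ, every measurable predictor h : X → ℝ and every measurable rejection function r : X → ℝ, E_{ℓ_def}(h,r) − E*_{ℓ_def} ≤ (E_L(h) − inf_{h' measurable} E_L(h')) + (l̄ + c̄)^{1−α}·β·(E_{ℓ^h_Φ}(r) − inf_{r' measurable} E_{ℓ^h_Φ}(r'))^α, where E_L(h) = ∫ L(h(x),y) dμ(x,y) and ℓ^h_Φ(r,x,y)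 = c(x,y)·Φ(r(x)) + L(h(x),y)·Φ(−r(x)) with h fixed. -/
open MeasureTheory ENNReal

/-- The binary label space `{−1, +1} ⊆ ℝ`. -/
def PMOne : Set ℝ := {-1, 1}

/-- `sign(u) = +1` if `u > 0` and `−1` otherwise. -/
noncomputable def sgn (u : ℝ) : ℝ := if 0 < u then 1 else -1

/-- The deferral (abstention) loss
`ℓ_def(h,r,x,y) = L(h(x),y)·1_{r(x)>0} + c(x,y)·1_{r(x)≤0}`. -/
noncomputable def absLoss {X : Type*} (L : ℝ → ℝ → ℝ) (c : X × ℝ → ℝ)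
    (h : X → ℝ) (r : X → ℝ) (z : X × ℝ) : ℝ :=
  (if 0 < r z.1 then L (h z.1) z.2 else 0) + (if r z.1 ≤ 0 then c z else 0)

/-- The surrogate loss `ℓ_Φ(h,r,x,y) = c(x,y)·Φ(r(x)) + L(h(x),y)·Φ(−r(x))`. -/
noncomputable def absSur {X : Type*} (L : ℝ → ℝ → ℝ) (c : X × ℝ → ℝ) (Φ : ℝ → ℝ)
    (h : X → ℝ) (r : X → ℝ) (z : X × ℝ) : ℝ :=
  c z * Φ (r z.1) + L (h z.1) z.2 * Φ (-r z.1)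

/-- Binary zero-one generalization error `E_{ℓ01}(r)`. -/
noncomputable def E01bin {X : Type*} [MeasurableSpace X]
    (ν : Measure (X × PMOne)) (r : X → ℝ) : ℝ≥0∞ :=
  ν {z | sgn (r z.1) ≠ (z.2 : ℝ)}

/-- Binary margin-based surrogate generalization error `E_Φ(r)`. -/
noncomputable def EPhiBin {X : Type*} [MeasurableSpace X]
    (Φ : ℝ → ℝ) (ν : Measure (X × PMOne)) (r : X → ℝ) : ℝ≥0∞ :=
  ∫⁻ z, ENNReal.ofReal (Φ ((z.2 : ℝ) * r z.1)) ∂ν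

theorem one_mem_PMOne : (1 : ℝ) ∈ PMOne := Or.inr rfl

theorem neg_one_mem_PMOne : (-1 : ℝ) ∈ PMOne := Or.inl rfl

/-- The (unnormalised) binary measure built from the weights `fc` (label `+1`) and `fl`
(label `-1`). -/
noncomputable def binMeas {X : Type*} [MeasurableSpace X] (μ : Measure (X × ℝ))
    (fc fl : X × ℝ → ℝ≥0∞) : Measure (X × PMOne) :=
  (μ.withDensity fc).map (fun z => (z.1, (⟨1, one_mem_PMOne⟩ : PMOne))) +
  (μ.withDensity fl).map (fun z => (z.1, (⟨-1, neg_one_mem_PMOne⟩ : PMOne)))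

theorem lintegral_binMeas {X : Type*} [MeasurableSpace X] (μ : Measure (X × ℝ))
    (fc fl : X × ℝ → ℝ≥0∞) (hfc : Measurable fc) (hfl : Measurable fl)
    (g : X × PMOne → ℝ≥0∞) (hg : Measurable g) :
    ∫⁻ w, g w ∂(binMeas μ fc fl) =
      ∫⁻ z, (fc z * g (z.1, (⟨1, one_mem_PMOne⟩ : PMOne)) +
        fl z * g (z.1, (⟨-1, neg_one_mem_PMOne⟩ : PMOne))) ∂μ := by
  unfold binMeas
  have m1 : Measurable (fun z : X × ℝ => (z.1, (⟨1, one_mem_PMOne⟩ : PMOne))) := by fun_prop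
  have m2 : Measurable (fun z : X × ℝ => (z.1, (⟨-1, neg_one_mem_PMOne⟩ : PMOne))) := by fun_prop
  have e1 := lintegral_withDensity_eq_lintegral_mul μ hfc (hg.comp m1)
  have e2 := lintegral_withDensity_eq_lintegral_mul μ hfl (hg.comp m2)
  simp only [Function.comp_apply, Pi.mul_apply] at e1 e2
  rw [lintegral_add_measure, lintegral_map hg m1, lintegral_map hg m2, e1, e2,
    lintegral_add_left]
  exact hfc.mul (hg.comp m1)

theorem measurable_absLoss {X : Type*} [MeasurableSpace X]
    (L : ℝ → ℝ → ℝ) (hLmeas : Measurable fun p : ℝ × ℝ => L p.1 p.2)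
    (c : X × ℝ → ℝ) (hcmeas : Measurable c)
    (h : X → ℝ) (hh : Measurable h) (r : X → ℝ) (hr : Measurable r) :
    Measurable (absLoss L c h r) := by
  have hl : Measurable (fun z : X × ℝ => L (h z.1) z.2) :=
    hLmeas.comp ((hh.comp measurable_fst).prodMk measurable_snd)
  unfold absLoss
  refine Measurable.add ?_ ?_
  · exact Measurable.ite (measurableSet_lt measurable_const (hr.comp measurable_fst)) hl
      measurable_const
  · exact Measurable.ite (measurableSet_le (hr.comp measurable_fst) measurable_const) hcmeas
      measurable_const

/-- First stage: the excess in `h`. -/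
theorem stage_one {X : Type*} [MeasurableSpace X]
    (lbar : ℝ)
    (L : ℝ → ℝ → ℝ) (hLmeas : Measurable fun p : ℝ × ℝ => L p.1 p.2)
    (hL : ∀ y' y, L y' y ∈ Set.Icc 0 lbar)
    (c : X × ℝ → ℝ) (hcmeas : Measurable c)
    (μ : Measure (X × ℝ)) [IsProbabilityMeasure μ]
    (h : X → ℝ) (hh : Measurable h) (h' : X → ℝ) (hh' : Measurable h')
    (r : X → ℝ) (hr : Measurable r) :
    genErr μ (absLoss L c h r) ≤ genErr μ (absLoss L c h' r) +
      (genErr μ (fun z => L (h z.1) z.2)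
            - ⨅ (h' : X → ℝ) (_ : Measurable h'), genErr μ (fun z => L (h' z.1) z.2)) := by
  classical
  set IL := ⨅ (h' : X → ℝ) (_ : Measurable h'), genErr μ (fun z => L (h' z.1) z.2) with hIL
  set k : X → ℝ := fun x => if 0 < r x then h' x else h x with hk
  have hkm : Measurable k := Measurable.ite (measurableSet_lt measurable_const hr) hh' hh
  have hl : Measurable (fun z : X × ℝ => L (h z.1) z.2) :=
    hLmeas.comp ((hh.comp measurable_fst).prodMk measurable_snd)
  have key : genErr μ (absLoss L c h r) + genErr μ (fun z => L (k z.1) z.2) =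
      genErr μ (absLoss L c h' r) + genErr μ (fun z => L (h z.1) z.2) := by
    unfold genErr
    rw [← lintegral_add_left (measurable_absLoss L hLmeas c hcmeas h hh r hr).ennreal_ofReal,
      ← lintegral_add_left (measurable_absLoss L hLmeas c hcmeas h' hh' r hr).ennreal_ofReal]
    congr 1
    ext z
    by_cases hz : 0 < r z.1
    · simp [absLoss, hk, hz, not_le.2 hz, add_comm]
    · simp [absLoss, hk, hz, not_lt.1 hz]
  have hfin : genErr μ (fun z => L (k z.1) z.2) ≠ ⊤ := by
    refine ne_of_lt (lt_of_le_of_lt (lintegral_mono (g := fun _ => ENNReal.ofReal lbar)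
      fun z => ENNReal.ofReal_le_ofReal (hL _ _).2) ?_)
    simp
  have h1 : IL ≤ genErr μ (fun z => L (k z.1) z.2) := iInf₂_le k hkm
  have h2 : genErr μ (fun z => L (h z.1) z.2) ≤ genErr μ (fun z => L (k z.1) z.2) +
      (genErr μ (fun z => L (h z.1) z.2) - IL) :=
    le_add_tsub.trans (by gcongr)
  refine (ENNReal.add_le_add_iff_right hfin).1 ?_
  rw [key]
  calc _ ≤ genErr μ (absLoss L c h' r) + (genErr μ (fun z => L (k z.1) z.2) +
      (genErr μ (fun z => L (h z.1) z.2) - IL)) := by gcongr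
    _ = _ := by ring

theorem iInf_scale {X : Type*} [MeasurableSpace X] (F : (X → ℝ) → ℝ≥0∞) (a : ℝ≥0∞)
    (h0 : a ≠ 0) (ht : a ≠ ⊤) :
    (⨅ (r' : X → ℝ) (_ : Measurable r'), a * F r') =
      a * ⨅ (r' : X → ℝ) (_ : Measurable r'), F r' := by
  rw [ENNReal.mul_iInf_of_ne h0 ht]
  congr 1
  ext r'
  rw [ENNReal.mul_iInf_of_ne h0 ht]

theorem scale_rpow (M D B : ℝ≥0∞) (α : ℝ) (h0 : M ≠ 0) (ht : M ≠ ⊤) (hα : 0 ≤ α) :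
    M * (B * (M⁻¹ * D) ^ α) = M ^ (1 - α) * B * D ^ α := by
  rw [ENNReal.mul_rpow_of_nonneg _ _ hα, ENNReal.inv_rpow, ← ENNReal.rpow_neg,
    sub_eq_add_neg, ENNReal.rpow_add _ _ h0 ht, ENNReal.rpow_one]
  ring

/-- Corollary 5.4: single-expert two-stage excess error bound,
general `Γ`. -/
theorem single_expert_two_stage_excess_error_bound {X : Type*} [MeasurableSpace X]
    (lbar cbar : ℝ) (hlbar : 0 < lbar) (hcbar : 0 < cbar)
    (L : ℝ → ℝ → ℝ) (hLmeas : Measurable fun p : ℝ × ℝ => L p.1 p.2)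
    (hL : ∀ y' y, L y' y ∈ Set.Icc 0 lbar)
    (c : X × ℝ → ℝ) (hcmeas : Measurable c) (hc : ∀ z, c z ∈ Set.Ioc 0 cbar)
    (Φ : ℝ → ℝ) (hΦmeas : Measurable Φ) (hΦmono : Antitone Φ)
    (hΦ0 : ∀ u, 0 ≤ Φ u) (hΦ1 : ∀ u, u ≤ 0 → 1 ≤ Φ u)
    (α β : ℝ) (hα : α ∈ Set.Ioc (0 : ℝ) 1) (hβ : 0 < β)
    (hcons : ∀ ν : Measure (X × PMOne), IsProbabilityMeasure ν →
      ∀ r : X → ℝ, Measurable r →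
        E01bin ν r - (⨅ (r' : X → ℝ) (_ : Measurable r'), E01bin ν r')
          ≤ ENNReal.ofReal β *
            (EPhiBin Φ ν r - ⨅ (r' : X → ℝ) (_ : Measurable r'), EPhiBin Φ ν r') ^ α)
    (μ : Measure (X × ℝ)) [IsProbabilityMeasure μ]
    (h : X → ℝ) (hh : Measurable h) (r : X → ℝ) (hr : Measurable r) :
    genErr μ (absLoss L c h r)
        - (⨅ (h' : X → ℝ) (_ : Measurable h') (r' : X → ℝ) (_ : Measurable r'),
            genErr μ (absLoss L c h' r'))
      ≤ (genErr μ (fun z => L (h z.1) z.2)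
            - ⨅ (h' : X → ℝ) (_ : Measurable h'), genErr μ (fun z => L (h' z.1) z.2))
        + ENNReal.ofReal ((lbar + cbar) ^ (1 - α) * β) *
            (genErr μ (absSur L c Φ h r)
              - ⨅ (r' : X → ℝ) (_ : Measurable r'), genErr μ (absSur L c Φ h r')) ^ α := by
  classical
  obtain ⟨hα0, hα1⟩ := hα
  set fc : X × ℝ → ℝ≥0∞ := fun z => ENNReal.ofReal (c z) with hfcdef
  set fl : X × ℝ → ℝ≥0∞ := fun z => ENNReal.ofReal (L (h z.1) z.2) with hfldef
  have hfc : Measurable fc := hcmeas.ennreal_ofReal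
  have hfl : Measurable fl :=
    (hLmeas.comp ((hh.comp measurable_fst).prodMk measurable_snd)).ennreal_ofReal
  set M : ℝ≥0∞ := ∫⁻ z, (fc z + fl z) ∂μ with hM
  have hMle : M ≤ ENNReal.ofReal (lbar + cbar) := by
    calc M ≤ ∫⁻ _, ENNReal.ofReal (lbar + cbar) ∂μ := by
          refine lintegral_mono fun z => ?_
          simp only [hfcdef, hfldef]
          rw [← ENNReal.ofReal_add (hc z).1.le (hL _ _).1]
          exact ENNReal.ofReal_le_ofReal (by linarith [(hc z).2, (hL (h z.1) z.2).2])
      _ = _ := by simp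
  have hMt : M ≠ ⊤ := ne_top_of_le_ne_top ENNReal.ofReal_ne_top hMle
  have hM0 : M ≠ 0 := by
    intro h0
    rw [hM, lintegral_eq_zero_iff (by fun_prop)] at h0
    have : ∀ᵐ z ∂μ, False := by
      filter_upwards [h0] with z hz
      have : 0 < fc z := ENNReal.ofReal_pos.2 (hc z).1
      simp only [Pi.zero_apply, add_eq_zero] at hz
      exact this.ne' hz.1
    rw [Filter.eventually_false_iff_eq_bot, ae_eq_bot] at this
    exact IsProbabilityMeasure.ne_zero μ this
  have hMi0 : M⁻¹ ≠ 0 := ENNReal.inv_ne_zero.2 hMt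
  have hMit : M⁻¹ ≠ ⊤ := ENNReal.inv_ne_top.2 hM0
  set ν : Measure (X × PMOne) := M⁻¹ • binMeas μ fc fl with hν
  have hprob : IsProbabilityMeasure ν := by
    constructor
    have := lintegral_binMeas μ fc fl hfc hfl (fun _ => 1) measurable_const
    simp only [lintegral_one, mul_one] at this
    rw [hν, Measure.smul_apply, this, smul_eq_mul]
    exact ENNReal.inv_mul_cancel hM0 hMt
  have e01 : ∀ r' : X → ℝ, Measurable r' →
      E01bin ν r' = M⁻¹ * genErr μ (absLoss L c h r') := by
    intro r' hr'
    have hs : Measurable (fun z : X × PMOne => sgn (r' z.1)) := by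
      unfold sgn
      exact Measurable.ite (measurableSet_lt measurable_const (hr'.comp measurable_fst))
        measurable_const measurable_const
    have hS : MeasurableSet {z : X × PMOne | sgn (r' z.1) ≠ (z.2 : ℝ)} :=
      (measurableSet_eq_fun hs (measurable_subtype_coe.comp measurable_snd)).compl
    unfold E01bin
    rw [hν, Measure.smul_apply, smul_eq_mul, ← lintegral_indicator_one hS,
      lintegral_binMeas μ fc fl hfc hfl _ (measurable_one.indicator hS)]
    unfold genErr
    congr 2
    ext z
    by_cases hz : 0 < r' z.1
    · have : ¬ ((1 : ℝ) = -1) := by norm_num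
      simp [absLoss, hz, not_le.2 hz, sgn, Set.indicator, hfldef, this]
    · have : ¬ ((-1 : ℝ) = 1) := by norm_num
      simp [absLoss, hz, not_lt.1 hz, sgn, Set.indicator, hfcdef, this]
  have ephi : ∀ r' : X → ℝ, Measurable r' →
      EPhiBin Φ ν r' = M⁻¹ * genErr μ (absSur L c Φ h r') := by
    intro r' hr'
    unfold EPhiBin
    have hg : Measurable (fun z : X × PMOne => ENNReal.ofReal (Φ ((z.2 : ℝ) * r' z.1))) :=
      (hΦmeas.comp ((measurable_subtype_coe.comp measurable_snd).mul
        (hr'.comp measurable_fst))).ennreal_ofReal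
    rw [hν, lintegral_smul_measure, smul_eq_mul, lintegral_binMeas μ fc fl hfc hfl _ hg]
    unfold genErr
    congr 2
    ext z
    simp only [absSur, hfcdef, hfldef, one_mul, neg_mul]
    rw [ENNReal.ofReal_add (mul_nonneg (hc z).1.le (hΦ0 _)) (mul_nonneg (hL _ _).1 (hΦ0 _)),
      ENNReal.ofReal_mul (hc z).1.le, ENNReal.ofReal_mul (hL _ _).1]
  have i01 : (⨅ (r' : X → ℝ) (_ : Measurable r'), E01bin ν r') =
      M⁻¹ * ⨅ (r' : X → ℝ) (_ : Measurable r'), genErr μ (absLoss L c h r') := by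
    rw [← iInf_scale _ _ hMi0 hMit]
    exact iInf_congr fun r' => iInf_congr fun hr' => e01 r' hr'
  have iphi : (⨅ (r' : X → ℝ) (_ : Measurable r'), EPhiBin Φ ν r') =
      M⁻¹ * ⨅ (r' : X → ℝ) (_ : Measurable r'), genErr μ (absSur L c Φ h r') := by
    rw [← iInf_scale _ _ hMi0 hMit]
    exact iInf_congr fun r' => iInf_congr fun hr' => ephi r' hr'
  have hcs := hcons ν hprob r hr
  rw [i01, iphi, e01 r hr, ephi r hr, ← ENNReal.mul_sub (fun _ _ => hMit),
    ← ENNReal.mul_sub (fun _ _ => hMit)] at hcs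
  set J := ⨅ (r' : X → ℝ) (_ : Measurable r'), genErr μ (absLoss L c h r') with hJ
  set D := genErr μ (absSur L c Φ h r)
              - ⨅ (r' : X → ℝ) (_ : Measurable r'), genErr μ (absSur L c Φ h r') with hD
  have hstage2 : genErr μ (absLoss L c h r) - J ≤
      ENNReal.ofReal ((lbar + cbar) ^ (1 - α) * β) * D ^ α := by
    have h1 : genErr μ (absLoss L c h r) - J =
        M * (M⁻¹ * (genErr μ (absLoss L c h r) - J)) := by
      rw [← mul_assoc, ENNReal.mul_inv_cancel hM0 hMt, one_mul]
    rw [h1]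
    refine (mul_le_mul_right hcs M).trans ?_
    rw [scale_rpow M D _ α hM0 hMt hα0.le]
    rw [ENNReal.ofReal_mul (by positivity), ← ENNReal.ofReal_rpow_of_nonneg (by positivity)
      (by linarith)]
    have : M ^ (1 - α) ≤ ENNReal.ofReal (lbar + cbar) ^ (1 - α) :=
      ENNReal.rpow_le_rpow hMle (by linarith)
    gcongr
  set I := (⨅ (h' : X → ℝ) (_ : Measurable h') (r' : X → ℝ) (_ : Measurable r'),
            genErr μ (absLoss L c h' r')) with hI
  set E := (genErr μ (fun z => L (h z.1) z.2)
            - ⨅ (h' : X → ℝ) (_ : Measurable h'), genErr μ (fun z => L (h' z.1) z.2)) with hE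
  have hstage1 : J - E ≤ I := by
    refine le_iInf₂ fun h' hh' => le_iInf₂ fun r' hr' => ?_
    rw [tsub_le_iff_right]
    exact (iInf₂_le r' hr').trans
      (stage_one lbar L hLmeas hL c hcmeas μ h hh h' hh' r' hr')
  rw [tsub_le_iff_right] at hstage1 hstage2 ⊢
  calc _ ≤ _ := hstage2
    _ ≤ ENNReal.ofReal ((lbar + cbar) ^ (1 - α) * β) * D ^ α + (I + E) := by gcongr
    _ = _ := by ring
end
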